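/- Let real parameters α₁, α₂, α₃, β₁, β₂, β₃ satisfy: 1+α₁+α₂+α₃ = β₁+β₂+β₃; 0 < α₂ < β₃ ≤ 2+α₁; 0 < α₃ < min(β₁, β₂); (1+α₁)α₂α₃ ≤ β₁β₂β₃; and additionally β₃ > 1+α₁ and β₃ ≥ 1+α₂. Put σ = α₁+α₂−β₃ and define Ωₙ = Σ_{k=0}^{n} A_{n,k} B_k, where A_{n,k} = C(n,k) (k+1+α₁−β₃)_{n−k} (β₃−α₂)_{n−k} (n+α₁)_k / (n+1+σ)_k and B_k = [(α₂)_k (β₁−α₃)_k (β₂−α₃)_k / ((β₁)_k (β₂)_k)] · c_k with c₀ = 1 and c_k = (1+σ)_{k−1}(2k+σ) for k ≥ 1. Then for every integer n ≥ 2, Ωₙ > (2+α₁−β₃)_{n−1} (1+β₃−α₂)_{n−1} Ω₁. -/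

import Mathlib

/-- Pochhammer symbol `(a)_k = a (a+1) ⋯ (a+k-1)` for a real number `a`. -/
noncomputable def poch (a : ℝ) (k : ℕ) : ℝ := ∏ i ∈ Finset.range k, (a + i)

/-- The coefficient `A_{n,k}` in the ₇F₆ series obtained from Whipple's transformation. -/
noncomputable def Acoef (α₁ α₂ β₃ σ : ℝ) (n k : ℕ) : ℝ :=
  (n.choose k) * poch ((k : ℝ) + 1 + α₁ - β₃) (n - k) * poch (β₃ - α₂) (n - k) *
    poch ((n : ℝ) + α₁) k / poch ((n : ℝ) + 1 + σ) k

/-- The factor `c_k`, with `c₀ = 1` and `c_k = (1+σ)_{k−1}(2k+σ)` for `k ≥ 1`. -/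
noncomputable def ccoef (σ : ℝ) (k : ℕ) : ℝ :=
  if k = 0 then 1 else poch (1 + σ) (k - 1) * (2 * (k : ℝ) + σ)

/-- The coefficient `B_k` in the ₇F₆ series obtained from Whipple's transformation. -/
noncomputable def Bcoef (α₂ α₃ β₁ β₂ σ : ℝ) (k : ℕ) : ℝ :=
  poch α₂ k * poch (β₁ - α₃) k * poch (β₂ - α₃) k / (poch β₁ k * poch β₂ k) * ccoef σ k

/-- `Ωₙ = Σ_{k=0}^{n} A_{n,k} B_k`. -/
noncomputable def Omega (α₁ α₂ α₃ β₁ β₂ β₃ σ : ℝ) (n : ℕ) : ℝ :=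
  ∑ k ∈ Finset.range (n + 1), Acoef α₁ α₂ β₃ σ n k * Bcoef α₂ α₃ β₁ β₂ σ k

/-!
Put `Cₙ = (2+α₁-β₃)ₙ₋₁ (1+β₃-α₂)ₙ₋₁`. The weights `B_k` are positive, and the sums `Ωₙ` and `Cₙ Ω₁`
can be compared term by term: the terms at `k = 0`, the only ones that may be negative, agree
exactly; `A_{n,1} ≥ Cₙ A_{1,1}`; and the terms of `Ωₙ` with `k ≥ 2` are positive.
-/

lemma poch_zero (a : ℝ) : poch a 0 = 1 := Finset.prod_range_zero _

lemma poch_one (a : ℝ) : poch a 1 = a := by simp [poch]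

lemma poch_succ (a : ℝ) (k : ℕ) : poch a (k + 1) = poch a k * (a + k) :=
  Finset.prod_range_succ _ _

lemma poch_succ_left (a : ℝ) (k : ℕ) : poch a (k + 1) = a * poch (1 + a) k := by
  simp only [poch, Finset.prod_range_succ', Nat.cast_zero, add_zero, Nat.cast_succ]
  rw [mul_comm]
  congr! 2
  ring

lemma poch_pos {a : ℝ} (ha : 0 < a) (k : ℕ) : 0 < poch a k :=
  Finset.prod_pos fun _ _ => by positivity

lemma poch_nonneg {a : ℝ} (ha : 0 ≤ a) (k : ℕ) : 0 ≤ poch a k :=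
  Finset.prod_nonneg fun _ _ => by positivity

lemma poch_eq_poch_one_add_mul {a : ℝ} {k : ℕ} (h : a + k ≠ 0) :
    poch a k = poch (1 + a) k * (a / (a + k)) := by
  rw [← mul_div_assoc, eq_div_iff h, ← poch_succ, poch_succ_left, mul_comm]

lemma ccoef_pos {σ : ℝ} (hσ : 0 < 1 + σ) (k : ℕ) : 0 < ccoef σ k := by
  cases k with
  | zero => simp [ccoef]
  | succ k =>
    have hfactor : 0 < 2 * ((k + 1 : ℕ) : ℝ) + σ := by
      push_cast
      linarith [k.cast_nonneg (α := ℝ)]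
    simpa [ccoef] using mul_pos (poch_pos hσ k) hfactor

lemma Bcoef_pos {α₂ α₃ β₁ β₂ σ : ℝ} (hα₂ : 0 < α₂) (hβ₁ : 0 < β₁) (hβ₂ : 0 < β₂)
    (hα₃β₁ : α₃ < β₁) (hα₃β₂ : α₃ < β₂) (hσ : 0 < 1 + σ) (k : ℕ) :
    0 < Bcoef α₂ α₃ β₁ β₂ σ k :=
  mul_pos
    (div_pos
      (mul_pos (mul_pos (poch_pos hα₂ k) (poch_pos (sub_pos.2 hα₃β₁) k))
        (poch_pos (sub_pos.2 hα₃β₂) k))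
      (mul_pos (poch_pos hβ₁ k) (poch_pos hβ₂ k)))
    (ccoef_pos hσ k)

lemma Acoef_pos {α₁ α₂ β₃ σ : ℝ} {n k : ℕ} (hkn : k ≤ n) (hβ₃ : β₃ < k + 1 + α₁)
    (hα₂ : α₂ < β₃) (hα₁ : 0 < n + α₁) (hσ : 0 < n + 1 + σ) :
    0 < Acoef α₁ α₂ β₃ σ n k :=
  div_pos
    (mul_pos
      (mul_pos
        (mul_pos (Nat.cast_pos.2 (Nat.choose_pos hkn)) (poch_pos (sub_pos.2 hβ₃) _))
        (poch_pos (sub_pos.2 hα₂) _))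
      (poch_pos hα₁ k))
    (poch_pos hσ k)

lemma Acoef_zero_right (α₁ α₂ β₃ σ : ℝ) (n : ℕ) :
    Acoef α₁ α₂ β₃ σ n 0 = poch (1 + α₁ - β₃) n * poch (β₃ - α₂) n := by
  simp [Acoef, poch_zero]

lemma Acoef_succ_one (α₁ α₂ β₃ σ : ℝ) (n : ℕ) :
    Acoef α₁ α₂ β₃ σ (n + 1) 1 =
      (n + 1) * poch (2 + α₁ - β₃) n * poch (β₃ - α₂) n * ((n + 1 + α₁) / (n + 2 + σ)) := by
  simp only [Acoef, Nat.choose_one_right, Nat.add_sub_cancel, poch_one, Nat.cast_succ,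
    Nat.cast_zero]
  ring_nf

lemma Acoef_succ_zero_eq (α₁ α₂ β₃ σ : ℝ) (n : ℕ) :
    Acoef α₁ α₂ β₃ σ (n + 1) 0 =
      poch (2 + α₁ - β₃) n * poch (1 + β₃ - α₂) n * Acoef α₁ α₂ β₃ σ 1 0 := by
  simp only [Acoef_zero_right, poch_one, poch_succ_left _ n]
  ring_nf

lemma div_le_succ_mul_div_mul_div {a b x : ℝ} (hb : 1 ≤ b) (hba : b ≤ a) (hx : 0 ≤ x) :
    a / (a + 1 - b) ≤ (x + 1) * (b / (b + x)) * ((x + a) / (x + a + 1 - b)) := by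
  have hden₁ : 0 < a + 1 - b := by linarith
  have hden₂ : 0 < b + x := by linarith
  have hden₃ : 0 < x + a + 1 - b := by linarith
  rw [← mul_div_assoc (x + 1), div_mul_div_comm, div_le_div_iff₀ hden₁ (mul_pos hden₂ hden₃),
    ← sub_nonneg]
  calc 0 ≤ (b - 1) * (a - b) * (x * (x + 1 + a)) :=
        mul_nonneg (mul_nonneg (by linarith) (by linarith)) (mul_nonneg hx (by linarith))
    _ = (x + 1) * b * (x + a) * (a + 1 - b) - a * ((b + x) * (x + a + 1 - b)) := by ring

lemma le_Acoef_succ_one {α₁ α₂ β₃ : ℝ} (hβ₃ : β₃ ≤ 2 + α₁) (hα₂ : 1 + α₂ ≤ β₃)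
    (hσ : β₃ ≤ 1 + α₁ + α₂) (n : ℕ) :
    poch (2 + α₁ - β₃) n * poch (1 + β₃ - α₂) n * Acoef α₁ α₂ β₃ (α₁ + α₂ - β₃) 1 1 ≤
      Acoef α₁ α₂ β₃ (α₁ + α₂ - β₃) (n + 1) 1 := by
  set P := poch (2 + α₁ - β₃) n
  set Q := poch (1 + β₃ - α₂) n with hQ
  set b := β₃ - α₂ with hb
  have hn : (0 : ℝ) ≤ n := n.cast_nonneg
  have hPQ : 0 ≤ P * Q :=
    mul_nonneg (poch_nonneg (by linarith) n) (poch_nonneg (by linarith) n)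
  have hpoch : poch b n = Q * (b / (b + n)) := by
    rw [poch_eq_poch_one_add_mul (by linarith), hQ, hb, add_sub_assoc]
  have hA₁ : Acoef α₁ α₂ β₃ (α₁ + α₂ - β₃) 1 1 = (1 + α₁) / (1 + α₁ + 1 - b) := by
    rw [Acoef_succ_one α₁ α₂ β₃ _ 0, poch_zero, poch_zero, hb]
    push_cast
    ring_nf
  calc P * Q * Acoef α₁ α₂ β₃ (α₁ + α₂ - β₃) 1 1
      = P * Q * ((1 + α₁) / (1 + α₁ + 1 - b)) := by rw [hA₁]
    _ ≤ P * Q * ((n + 1) * (b / (b + n)) * ((n + (1 + α₁)) / (n + (1 + α₁) + 1 - b))) :=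
        mul_le_mul_of_nonneg_left
          (div_le_succ_mul_div_mul_div (by linarith) (by linarith) hn) hPQ
    _ = (n + 1) * P * poch b n * ((n + 1 + α₁) / (n + 2 + (α₁ + α₂ - β₃))) := by
        rw [hpoch, show (n : ℝ) + (1 + α₁) + 1 - b = n + 2 + (α₁ + α₂ - β₃) by rw [hb]; ring]
        ring
    _ = Acoef α₁ α₂ β₃ (α₁ + α₂ - β₃) (n + 1) 1 := (Acoef_succ_one ..).symm

lemma Omega_succ (α₁ α₂ α₃ β₁ β₂ β₃ σ : ℝ) (n : ℕ) :
    Omega α₁ α₂ α₃ β₁ β₂ β₃ σ (n + 1) =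
      ∑ k ∈ Finset.range n, Acoef α₁ α₂ β₃ σ (n + 1) (k + 2) * Bcoef α₂ α₃ β₁ β₂ σ (k + 2) +
        Acoef α₁ α₂ β₃ σ (n + 1) 1 * Bcoef α₂ α₃ β₁ β₂ σ 1 +
        Acoef α₁ α₂ β₃ σ (n + 1) 0 * Bcoef α₂ α₃ β₁ β₂ σ 0 := by
  rw [Omega, Finset.sum_range_succ', Finset.sum_range_succ']

theorem stmt2_general {α₁ α₂ α₃ β₁ β₂ β₃ : ℝ} (hα₂ : 0 < α₂) (hβ₁ : 0 < β₁) (hβ₂ : 0 < β₂)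
    (hα₃β₁ : α₃ < β₁) (hα₃β₂ : α₃ < β₂) (hβ₃ : β₃ ≤ 2 + α₁) (hα₂β₃ : 1 + α₂ ≤ β₃)
    (hσ : β₃ < 1 + α₁ + α₂) {n : ℕ} (hn : 2 ≤ n) :
    poch (2 + α₁ - β₃) (n - 1) * poch (1 + β₃ - α₂) (n - 1) *
        Omega α₁ α₂ α₃ β₁ β₂ β₃ (α₁ + α₂ - β₃) 1 <
      Omega α₁ α₂ α₃ β₁ β₂ β₃ (α₁ + α₂ - β₃) n := by
  obtain ⟨m, rfl⟩ : ∃ m, n = m + 1 := Nat.exists_eq_add_of_le' (by omega)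
  have hm : (1 : ℝ) ≤ m := by exact_mod_cast Nat.le_of_succ_le_succ hn
  have hB := Bcoef_pos hα₂ hβ₁ hβ₂ hα₃β₁ hα₃β₂ (σ := α₁ + α₂ - β₃) (by linarith)
  have htail : 0 < ∑ k ∈ Finset.range m, Acoef α₁ α₂ β₃ (α₁ + α₂ - β₃) (m + 1) (k + 2) *
      Bcoef α₂ α₃ β₁ β₂ (α₁ + α₂ - β₃) (k + 2) := by
    refine Finset.sum_pos (fun k hk => mul_pos (Acoef_pos ?_ ?_ ?_ ?_ ?_) (hB _)) ⟨0, ?_⟩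
    · have := Finset.mem_range.1 hk
      omega
    · push_cast
      linarith [k.cast_nonneg (α := ℝ)]
    · linarith
    · push_cast
      linarith
    · push_cast
      linarith
    · exact Finset.mem_range.2 (by omega)
  have hone := mul_le_mul_of_nonneg_right (le_Acoef_succ_one hβ₃ hα₂β₃ hσ.le m) (hB 1).le
  rw [Nat.add_sub_cancel, Omega_succ _ _ _ _ _ _ _ m, Omega_succ _ _ _ _ _ _ _ 0,
    Finset.sum_range_zero, Acoef_succ_zero_eq _ _ _ _ m]
  linarith

theorem stmt2 (α₁ α₂ α₃ β₁ β₂ β₃ : ℝ)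
    (hA1 : 1 + α₁ + α₂ + α₃ = β₁ + β₂ + β₃)
    (hA2a : 0 < α₂) (hA2b : α₂ < β₃) (hA2c : β₃ ≤ 2 + α₁)
    (hA3a : 0 < α₃) (hA3b : α₃ < min β₁ β₂)
    (hA4 : (1 + α₁) * α₂ * α₃ ≤ β₁ * β₂ * β₃)
    (hcase1 : 1 + α₁ < β₃) (hcase2 : 1 + α₂ ≤ β₃) :
    ∀ n : ℕ, 2 ≤ n →
      poch (2 + α₁ - β₃) (n - 1) * poch (1 + β₃ - α₂) (n - 1) *
          Omega α₁ α₂ α₃ β₁ β₂ β₃ (α₁ + α₂ - β₃) 1 <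
        Omega α₁ α₂ α₃ β₁ β₂ β₃ (α₁ + α₂ - β₃) n := by
  intro n hn
  obtain ⟨hα₃β₁, hα₃β₂⟩ := lt_min_iff.1 hA3b
  exact stmt2_general hA2a (hA3a.trans hα₃β₁) (hA3a.trans hα₃β₂) hα₃β₁ hα₃β₂ hA2c hcase2
    (by linarith) hn
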